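/- arXiv:1506.03437 — 2 statements merged into one kernel-verified Lean document; each statement's English description precedes it below -/
import Mathlib

section
/- Let 𝟙 ∈ ℝⁿ be the vector of all ones, let G_p, Q_p, R be symmetric n×n real matrices with Q_p positive definite, let E be an n×m real matrix, let γ > 0, and set c = diag(Eᵀ R E). Suppose x ∈ ℝᵐ satisfies x ≥ 0 entrywise and G = G_p + E·diag(x)·Eᵀ is positive definite, and suppose Y is symmetric positive definite with diag(Eᵀ(Y − R)E) ≤ γ𝟙 entrywise. Then 2·trace((Q_p^{1/2} Y Q_p^{1/2})^{1/2}) − trace(Y G_p) ≤ trace(G⁻¹ Q_p) + (γ𝟙 + c)ᵀ x. -/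
/-!
Put `Z = Qs⁻¹ S Qs⁻¹`, a symmetric matrix with `Z Qp Z = Y` and `trace (Z Qp) = trace S`.
The trace of the positive semidefinite matrix `Qs (G⁻¹ - Z) G (G⁻¹ - Z) Qs` is
`trace (G⁻¹ Qp) - 2 trace S + trace (Y G)`, so `2 trace S ≤ trace (G⁻¹ Qp) + trace (Y G)`
(`two_trace_sqrt_le`). Substituting `G = Gp + E diag(x) Eᵀ` splits `trace (Y G)` into `trace (Y Gp)`
and `∑ l, (Eᵀ Y E)_ll x_l`, and dual feasibility with `x ≥ 0` bounds the last sum.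
-/

open Matrix

/-- A lower bound, independent of `G`, for `trace (G⁻¹ Q) + trace (Y G)` with `Q = Qs²`: the gap is
the trace of `Qs (G⁻¹ - Z) G (G⁻¹ - Z) Qs` for `Z = Qs⁻¹ S Qs⁻¹`. -/
theorem two_trace_sqrt_le {n : ℕ} {Qs S G Y : Matrix (Fin n) (Fin n) ℝ}
    (hQs : Qs.IsSymm) (hQsu : IsUnit Qs.det) (hS : S.IsSymm) (hS2 : S * S = Qs * Y * Qs)
    (hG : G.PosDef) :
    2 * S.trace ≤ (G⁻¹ * (Qs * Qs)).trace + (Y * G).trace := by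
  have hGu : IsUnit G.det := hG.det_pos.ne'.isUnit
  have hGs : Gᵀ = G := by simpa using hG.isHermitian.eq
  obtain ⟨Z, hZ⟩ : ∃ Z, Z = Qs⁻¹ * S * Qs⁻¹ := ⟨_, rfl⟩
  have hZs : Zᵀ = Z := by
    simp [hZ, transpose_mul, transpose_nonsing_inv, hQs.eq, hS.eq, mul_assoc]
  have hZQ : Z * Qs = Qs⁻¹ * S := by
    rw [hZ, nonsing_inv_mul_cancel_right _ _ hQsu]
  have hQZ : Qs * Z = S * Qs⁻¹ := by
    rw [hZ, mul_assoc, mul_nonsing_inv_cancel_left _ _ hQsu]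
  have hZQZ : Z * (Qs * Qs) * Z = Y := by
    calc Z * (Qs * Qs) * Z = (Z * Qs) * (Qs * Z) := by simp only [mul_assoc]
      _ = Qs⁻¹ * (S * S) * Qs⁻¹ := by rw [hZQ, hQZ]; simp only [mul_assoc]
      _ = Y := by
        rw [hS2, mul_assoc Qs Y Qs, nonsing_inv_mul_cancel_left _ _ hQsu,
          mul_nonsing_inv_cancel_right _ _ hQsu]
  have hZtr : (Z * (Qs * Qs)).trace = S.trace := by
    rw [← mul_assoc, hZQ, trace_mul_comm, ← mul_assoc, mul_nonsing_inv _ hQsu, one_mul]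
  have hpos : 0 ≤ (((G⁻¹ - Z) * Qs)ᴴ * G * ((G⁻¹ - Z) * Qs)).trace :=
    (hG.posSemidef.conjTranspose_mul_mul_same _).trace_nonneg
  have hconj : ((G⁻¹ - Z) * Qs)ᴴ = Qs * (G⁻¹ - Z) := by
    simp [conjTranspose_eq_transpose_of_trivial, transpose_mul, transpose_nonsing_inv, hQs.eq,
      hGs, hZs]
  have hsq : (G⁻¹ - Z) * G * (G⁻¹ - Z) = G⁻¹ - Z - Z + Z * G * Z := by
    simp only [sub_mul, mul_sub, nonsing_inv_mul _ hGu, one_mul,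
      mul_nonsing_inv_cancel_right _ _ hGu]
    abel
  have hcyc : (Z * G * Z * (Qs * Qs)).trace = (Y * G).trace := by
    rw [← hZQZ, trace_mul_comm (Z * (Qs * Qs) * Z) G, mul_assoc Z G Z, mul_assoc Z (G * Z),
      trace_mul_comm]
    simp only [mul_assoc]
  have hexp : (((G⁻¹ - Z) * Qs)ᴴ * G * ((G⁻¹ - Z) * Qs)).trace
      = (G⁻¹ * (Qs * Qs)).trace - 2 * S.trace + (Y * G).trace := by
    calc _ = (Qs * ((G⁻¹ - Z) * G * (G⁻¹ - Z) * Qs)).trace := by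
          rw [hconj]; simp only [mul_assoc]
      _ = ((G⁻¹ - Z) * G * (G⁻¹ - Z) * (Qs * Qs)).trace := by
          rw [trace_mul_comm, mul_assoc]
      _ = _ := by
          rw [hsq, add_mul, sub_mul, sub_mul, trace_add, trace_sub, trace_sub, hZtr, hcyc]
          ring
  linarith

theorem stmt_9 (n m : ℕ)
    (Gp Qp R G Y : Matrix (Fin n) (Fin n) ℝ) (E : Matrix (Fin n) (Fin m) ℝ)
    (γ : ℝ) (hγ : 0 < γ)
    (hGp : Gp.IsSymm) (hQp : Qp.IsSymm) (hR : R.IsSymm) (hQppd : Qp.PosDef)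
    (x : Fin m → ℝ) (hx : ∀ l, 0 ≤ x l)
    (hG : G = Gp + E * Matrix.diagonal x * Eᵀ) (hGpd : G.PosDef)
    (hYpd : Y.PosDef)
    (hYfeas : ∀ l, (Eᵀ * (Y - R) * E).diag l ≤ γ)
    (Qs S : Matrix (Fin n) (Fin n) ℝ)
    (hQs : Qs.PosSemidef) (hQs2 : Qs * Qs = Qp)
    (hS : S.PosSemidef) (hS2 : S * S = Qs * Y * Qs) :
    2 * S.trace - (Y * Gp).trace ≤
      (G⁻¹ * Qp).trace + (γ • (1 : Fin m → ℝ) + (Eᵀ * R * E).diag) ⬝ᵥ x := by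
  have hQsu : IsUnit Qs.det := by
    have h := hQppd.det_pos.ne'
    rw [← hQs2, det_mul] at h
    exact (left_ne_zero_of_mul h).isUnit
  have hmain := two_trace_sqrt_le (by simpa [IsSymm] using hQs.isHermitian.eq) hQsu
    (by simpa [IsSymm] using hS.isHermitian.eq) hS2 hGpd
  rw [hQs2] at hmain
  have hYG : (Y * G).trace = (Y * Gp).trace + (Eᵀ * Y * E).diag ⬝ᵥ x := by
    have h : (Y * (E * diagonal x * Eᵀ)).trace = (Eᵀ * Y * E * diagonal x).trace := by
      rw [← Matrix.mul_assoc, trace_mul_comm]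
      simp only [Matrix.mul_assoc]
    rw [hG, mul_add, trace_add, h]
    simp [trace, dotProduct, mul_diagonal]
  have hle : (Eᵀ * Y * E).diag ⬝ᵥ x ≤ (γ • (1 : Fin m → ℝ) + (Eᵀ * R * E).diag) ⬝ᵥ x := by
    refine Finset.sum_le_sum fun l _ => mul_le_mul_of_nonneg_right ?_ (hx l)
    have h := hYfeas l
    simp only [Matrix.mul_sub, Matrix.sub_mul, diag_apply, Matrix.sub_apply] at h
    simp only [diag_apply, Pi.add_apply, Pi.smul_apply, Pi.one_apply, smul_eq_mul, mul_one]
    linarith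
  linarith
end

section
/- Let 𝟙 ∈ ℝⁿ be the vector of all ones, let G_p, Q_p, R be symmetric n×n real matrices with Q_p positive definite, let E be an n×m real matrix, let γ ∈ ℝ, and set c = diag(Eᵀ R E). Let x ∈ ℝᵐ be such that G = G_p + E·diag(x)·Eᵀ is positive definite, and define Y = G⁻¹ Q_p G⁻¹ and y = γ𝟙 − diag(Eᵀ(Y − R)E). Then the difference between the primal objective trace(G⁻¹Q_p) + (γ𝟙 + c)ᵀx and the dual objective 2·trace((Q_p^{1/2} Y Q_p^{1/2})^{1/2}) − trace(Y G_p) equals yᵀ x. -/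
open Matrix

/-! The matrix `T = Qs * G⁻¹ * Qs` is positive semidefinite and squares to
`Qs * Y * Qs`, so uniqueness of positive semidefinite square roots gives `S = T` and
`tr S = tr (G⁻¹ * Qp)`. Since also `tr (Y * G) = tr (G⁻¹ * Qp)`, the gap reduces to
`(γ𝟙 + c) ⬝ᵥ x - tr (Y * E * diag x * Eᵀ)`, which is `y ⬝ᵥ x` by cyclicity of the trace. -/

open scoped MatrixOrder Matrix.Norms.L2Operator in
lemma posSemidef_eq_of_mul_self_eq {n : ℕ} {A B : Matrix (Fin n) (Fin n) ℝ}
    (hA : A.PosSemidef) (hB : B.PosSemidef) (h : A * A = B * B) : A = B := by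
  rw [← CFC.sqrt_mul_self A hA.nonneg, h, CFC.sqrt_mul_self B hB.nonneg]

lemma trace_mul_conj_diagonal {n m : ℕ} (A : Matrix (Fin n) (Fin n) ℝ)
    (E : Matrix (Fin n) (Fin m) ℝ) (x : Fin m → ℝ) :
    (A * (E * Matrix.diagonal x * Eᵀ)).trace = (Eᵀ * A * E).diag ⬝ᵥ x := by
  have h : (A * (E * Matrix.diagonal x * Eᵀ)).trace
      = (Eᵀ * A * E * Matrix.diagonal x).trace := by
    rw [← Matrix.mul_assoc, Matrix.trace_mul_comm]
    simp only [Matrix.mul_assoc]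
  rw [h]
  simp [Matrix.trace, dotProduct, Matrix.mul_diagonal]

theorem stmt_10 (n m : ℕ)
    (Gp Qp R G Y : Matrix (Fin n) (Fin n) ℝ) (E : Matrix (Fin n) (Fin m) ℝ)
    (γ : ℝ)
    (hGp : Gp.IsSymm) (hQp : Qp.IsSymm) (hR : R.IsSymm) (hQppd : Qp.PosDef)
    (x : Fin m → ℝ)
    (hG : G = Gp + E * Matrix.diagonal x * Eᵀ) (hGpd : G.PosDef)
    (hY : Y = G⁻¹ * Qp * G⁻¹)
    (y : Fin m → ℝ)
    (hy : y = γ • (1 : Fin m → ℝ) - (Eᵀ * (Y - R) * E).diag)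
    (Qs S : Matrix (Fin n) (Fin n) ℝ)
    (hQs : Qs.PosSemidef) (hQs2 : Qs * Qs = Qp)
    (hS : S.PosSemidef) (hS2 : S * S = Qs * Y * Qs) :
    ((G⁻¹ * Qp).trace + (γ • (1 : Fin m → ℝ) + (Eᵀ * R * E).diag) ⬝ᵥ x)
      - (2 * S.trace - (Y * Gp).trace)
      = y ⬝ᵥ x := by
  have hdet : IsUnit G.det := (Matrix.isUnit_iff_isUnit_det G).mp hGpd.isUnit
  have hT : (Qs * G⁻¹ * Qs).PosSemidef := by
    have h := hGpd.inv.posSemidef.mul_mul_conjTranspose_same Qs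
    rwa [hQs.isHermitian.eq] at h
  have hST : S = Qs * G⁻¹ * Qs := by
    refine posSemidef_eq_of_mul_self_eq hS hT ?_
    rw [hS2, hY, ← hQs2]
    simp only [Matrix.mul_assoc]
  have htrS : S.trace = (G⁻¹ * Qp).trace := by
    rw [hST, Matrix.mul_assoc, Matrix.trace_mul_comm, Matrix.mul_assoc, hQs2]
  have htrYG : (Y * G).trace = (G⁻¹ * Qp).trace := by
    rw [hY, Matrix.mul_assoc, Matrix.nonsing_inv_mul G hdet, Matrix.mul_one]
  have hsplit : (Y * G).trace = (Y * Gp).trace + (Eᵀ * Y * E).diag ⬝ᵥ x := by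
    conv_lhs => rw [hG]
    rw [Matrix.mul_add, Matrix.trace_add, trace_mul_conj_diagonal]
  rw [hy, Matrix.mul_sub, Matrix.sub_mul, Matrix.diag_sub, sub_dotProduct, sub_dotProduct,
    add_dotProduct]
  linarith
end
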